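/- Let ν ∈ M_O. The following statements are equivalent: (i) there exist a nonzero μ ∈ M_O and a regularly varying increasing sequence (c_n) of positive numbers such that c_n ν(n·) → μ in M_O as n → ∞; (ii) there exist a nonzero μ ∈ M_O and a regularly varying function c : (0,∞) → (0,∞) such that c(t) ν(t·) → μ in M_O as t → ∞; (iii) there exist a nonzero μ ∈ M_O and a Borel set E ⊆ O bounded away from C with 0 < ν(tE) < ∞ for all large t such that ν(tE)^{-1} ν(t·) → μ in M_O as t → ∞; (iv) there exist a nonzero μ ∈ M_O and an increasing sequence (b_n) of positive numbers such that n ν(b_n ·) → μ in M_O as n → ∞; (v) there exist a nonzero μ ∈ M_O and an increasing function b : (0,∞) → (0,∞) such that t ν(b(t)·) → μ in M_O as t → ∞. -/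

import Mathlib

open MeasureTheory Metric Filter Topology Set ENNReal

noncomputable section

variable {S : Type*} [MetricSpace S] [MeasurableSpace S]

/-- `A` is bounded away from `C`: `A ⊆ S \ C^r` for some `r > 0`. -/
def BddAway (C A : Set S) : Prop := ∃ r > 0, ∀ x ∈ A, r ≤ infDist x C

/-- The class `C_O` of test functions: bounded, nonnegative, continuous on `O = S \ C`,
and vanishing on `C^r` for some `r > 0` (extended by `0` to all of `S`). -/
def IsCO (C : Set S) (f : S → ℝ) : Prop :=
  ContinuousOn f Cᶜ ∧ (∀ x, 0 ≤ f x) ∧ (∃ B : ℝ, ∀ x, f x ≤ B) ∧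
    ∃ r > 0, ∀ x, infDist x C < r → f x = 0

/-- The class `M_O`: Borel measures on `O = S \ C` (i.e. giving no mass to `C`)
that are finite on `S \ C^r` for each `r > 0`. -/
def MemMO (C : Set S) (μ : Measure S) : Prop :=
  μ C = 0 ∧ ∀ r : ℝ, 0 < r → μ {x | r ≤ infDist x C} < ⊤

/-- Convergence `μ_n → μ` in `M_O`. -/
def MOTendsto (C : Set S) (μn : ℕ → Measure S) (μ : Measure S) : Prop :=
  ∀ f : S → ℝ, IsCO C f →
    Tendsto (fun n => ∫ x, f x ∂ μn n) atTop (𝓝 (∫ x, f x ∂ μ))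

/-- Axioms (A1)–(A3) for a scalar multiplication `(0,∞) × S → S`, together with the
requirement that `C` be a cone. -/
def ScaleAxioms (C : Set S) (sm : ℝ → S → S) : Prop :=
  ContinuousOn (fun p : ℝ × S => sm p.1 p.2) (Set.Ioi (0:ℝ) ×ˢ Set.univ) ∧
  (∀ x, sm 1 x = x) ∧
  (∀ l₁ l₂ : ℝ, 0 < l₁ → 0 < l₂ → ∀ x, sm l₁ (sm l₂ x) = sm (l₁ * l₂) x) ∧
  (∀ l : ℝ, 1 < l → ∀ x ∈ Cᶜ, infDist x C < infDist (sm l x) C) ∧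
  (∀ x ∈ C, ∀ l : ℝ, 0 < l → sm l x ∈ C)

/-- A positive measurable function on `(0,∞)` is regularly varying:
`c(λt)/c(t) → λ^ρ` as `t → ∞`, for all `λ > 0` and some `ρ ∈ ℝ`. -/
def RegVarFun (c : ℝ → ℝ) : Prop :=
  (∀ t : ℝ, 0 < t → 0 < c t) ∧ Measurable c ∧
    ∃ ρ : ℝ, ∀ l : ℝ, 0 < l →
      Tendsto (fun t : ℝ => c (l * t) / c t) atTop (𝓝 (l ^ ρ))

/-- A sequence of positive numbers is regularly varying:
`c_{⌊λn⌋}/c_n → λ^ρ` as `n → ∞`, for all `λ > 0` and some `ρ ∈ ℝ`. -/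
def RegVarSeq (c : ℕ → ℝ) : Prop :=
  (∀ n, 0 < c n) ∧
    ∃ ρ : ℝ, ∀ l : ℝ, 0 < l →
      Tendsto (fun n : ℕ => c ⌊l * (n : ℝ)⌋₊ / c n) atTop (𝓝 (l ^ ρ))

/-!
All five statements are equivalent to the convergence `k(t) ν(t·) → μ` for *some* normalization `k`.
Given such a convergence, test it against a function that increases strictly with the distance to
`C` beyond some radius. By (A3) its integral against `ν(t·)` is antitone and continuous in `t`, and
the reciprocal `c` of this integral is an equally good normalization. The same strict monotonicity
shows that `c(λt)/c(t)` converges to a limit larger than `1` for every `λ > 1`, so `c` is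
regularly varying and `c(t) → ∞`; inverting `c` gives `b`, and the mass of a continuity set
`{x | r ≤ d(x, C)}` gives the normalization by `ν(tE)`.

Convergence along a sequence of scales `b n → ∞` with `b (n + 1) / b n → 1` extends to all scales,
because `∫ f dν(t·)` barely changes when `t` is multiplied by a factor close to `1`: the oscillation
of `f` along short orbit segments is itself a test function. If `n ν(b_n ·) → μ`, the ratio
condition holds since the measures `n ν(b_n ·)` and `n ν(b_{n+1} ·)` have the same limit, which by
(A3) differs from the limit of `n ν(λ b_n ·)` for every `λ > 1`.
-/

section RealFunctions

lemma eq_mul_of_monotone_of_map_add {g : ℝ → ℝ} (hmono : Monotone g)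
    (hadd : ∀ u v, g (u + v) = g u + g v) (u : ℝ) : g u = u * g 1 := by
  have hcont : Continuous (AddMonoidHom.mk' g hadd) :=
    Measure.AddMonoidHom.continuous_of_measurable _ hmono.measurable
  simpa using map_real_smul (AddMonoidHom.mk' g hadd) hcont u 1

lemma exists_tendsto_sub_mul {h : ℝ → ℝ} (hmono : Monotone h)
    (hlim : ∀ u > 0, ∃ y, Tendsto (fun s => h (s + u) - h s) atTop (𝓝 y)) :
    ∃ ρ : ℝ, ∀ u, Tendsto (fun s => h (s + u) - h s) atTop (𝓝 (u * ρ)) := by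
  have hlim' : ∀ u, ∃ y, Tendsto (fun s => h (s + u) - h s) atTop (𝓝 y) := by
    intro u
    rcases lt_trichotomy u 0 with hu | rfl | hu
    · obtain ⟨y, hy⟩ := hlim (-u) (neg_pos.2 hu)
      refine ⟨-y, (hy.comp (tendsto_atTop_add_const_right _ u tendsto_id)).neg.congr fun s => ?_⟩
      simp
    · exact ⟨0, by simp⟩
    · exact hlim u hu
  choose g hg using hlim'
  have hadd : ∀ u v, g (u + v) = g u + g v := by
    intro u v
    have hshift := (hg v).comp (tendsto_atTop_add_const_right _ u tendsto_id)
    refine tendsto_nhds_unique (hg (u + v)) (((hg u).add hshift).congr fun s => ?_)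
    simp [add_assoc]
  have hgmono : Monotone g := fun u v huv =>
    le_of_tendsto_of_tendsto' (hg u) (hg v) fun s => by gcongr; exact hmono (by gcongr)
  exact ⟨g 1, fun u => eq_mul_of_monotone_of_map_add hgmono hadd u ▸ hg u⟩

lemma exists_tendsto_div_rpow {c : ℝ → ℝ} (hmono : MonotoneOn c (Ioi 0))
    (hpos : ∀ t, 0 < t → 0 < c t)
    (hlim : ∀ l : ℝ, 1 < l → ∃ K > 0, Tendsto (fun t => c (l * t) / c t) atTop (𝓝 K)) :
    ∃ ρ : ℝ, ∀ l : ℝ, 0 < l → Tendsto (fun t => c (l * t) / c t) atTop (𝓝 (l ^ ρ)) := by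
  have hexp : ∀ s, 0 < c (Real.exp s) := fun s => hpos _ (Real.exp_pos s)
  obtain ⟨ρ, hρ⟩ := exists_tendsto_sub_mul (h := fun s => Real.log (c (Real.exp s)))
    (fun s t hst => Real.log_le_log (hexp s)
      (hmono (Real.exp_pos s) (Real.exp_pos t) (Real.exp_le_exp.2 hst)))
    (fun u hu => by
      obtain ⟨K, hK, ht⟩ := hlim _ (Real.one_lt_exp_iff.2 hu)
      refine ⟨Real.log K, ((ht.comp Real.tendsto_exp_atTop).log hK.ne').congr fun s => ?_⟩
      rw [Function.comp_apply, mul_comm, ← Real.exp_add,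
        Real.log_div (hexp _).ne' (hexp _).ne'])
  refine ⟨ρ, fun l hl => ?_⟩
  rw [Real.rpow_def_of_pos hl]
  refine ((hρ (Real.log l)).comp Real.tendsto_log_atTop).rexp.congr' ?_
  filter_upwards [eventually_gt_atTop 0] with t ht
  rw [Function.comp_apply, Real.exp_sub, Real.exp_log (hexp _), Real.exp_log (hexp _),
    Real.exp_add, Real.exp_log ht, Real.exp_log hl, mul_comm]

lemma tendsto_div_rpow_of_tendsto_div {ι : Type*} {L : Filter ι} {c : ℝ → ℝ} {s t : ι → ℝ}
    {l ρ : ℝ} (hmono : MonotoneOn c (Ioi 0)) (hpos : ∀ t, 0 < t → 0 < c t)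
    (hlim : ∀ m : ℝ, 0 < m → Tendsto (fun t => c (m * t) / c t) atTop (𝓝 (m ^ ρ)))
    (hl : 0 < l) (ht : Tendsto t L atTop) (hst : Tendsto (fun i => s i / t i) L (𝓝 l)) :
    Tendsto (fun i => c (s i) / c (t i)) L (𝓝 (l ^ ρ)) := by
  have hcont : ContinuousAt (fun m : ℝ => m ^ ρ) l := Real.continuousAt_rpow_const _ _ (.inl hl.ne')
  refine tendsto_order.2 ⟨fun y hy => ?_, fun y hy => ?_⟩
  · obtain ⟨m, ⟨hym, hm⟩, hml : m < l⟩ := ((eventually_nhdsWithin_of_eventually_nhds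
      ((hcont.eventually_const_lt hy).and (eventually_gt_nhds hl))).and
        (eventually_mem_nhdsWithin (s := Iio l))).exists
    filter_upwards [((hlim m hm).comp ht).eventually_const_lt hym, ht.eventually_gt_atTop 0,
      hst.eventually_const_lt hml] with i hyi hti hmi
    have hms : m * t i < s i := (lt_div_iff₀ hti).1 hmi
    have hmt : 0 < m * t i := by positivity
    exact hyi.trans_le ((div_le_div_iff_of_pos_right (hpos _ hti)).2
      (hmono hmt (hmt.trans hms) hms.le))
  · obtain ⟨m, hym, hlm : l < m⟩ := ((eventually_nhdsWithin_of_eventually_nhds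
      (hcont.eventually_lt_const hy)).and (eventually_mem_nhdsWithin (s := Ioi l))).exists
    have hm : 0 < m := hl.trans hlm
    filter_upwards [((hlim m hm).comp ht).eventually_lt_const hym, ht.eventually_gt_atTop 0,
      hst.eventually_lt_const hlm, hst.eventually_const_lt hl] with i hyi hti hmi h0
    have hms : s i < m * t i := (div_lt_iff₀ hti).1 hmi
    have hs : 0 < s i := (div_pos_iff_of_pos_right hti).1 h0
    exact ((div_le_div_iff_of_pos_right (hpos _ hti)).2
      (hmono hs (hs.trans hms) hms.le)).trans_lt hyi

lemma RegVarFun.regVarSeq {c : ℝ → ℝ} (hc : RegVarFun c) (hmono : Monotone c) (hc0 : 0 < c 0) :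
    RegVarSeq fun n => c n := by
  obtain ⟨hpos, -, ρ, hρ⟩ := hc
  refine ⟨fun n => hc0.trans_le (hmono n.cast_nonneg), ρ, fun l hl => ?_⟩
  exact tendsto_div_rpow_of_tendsto_div (hmono.monotoneOn _) hpos hρ hl
    tendsto_natCast_atTop_atTop
    ((tendsto_nat_floor_mul_div_atTop hl.le).comp tendsto_natCast_atTop_atTop)

lemma tendsto_atTop_of_tendsto_div {c : ℝ → ℝ} {l K : ℝ} (hmono : Monotone c) {t₀ : ℝ}
    (hpos : 0 < c t₀) (hl : 0 < l) (hK : 1 < K)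
    (hlim : Tendsto (fun t => c (l * t) / c t) atTop (𝓝 K)) : Tendsto c atTop atTop := by
  refine (tendsto_atTop_of_monotone hmono).resolve_right ?_
  rintro ⟨M, hM⟩
  have hM0 : M ≠ 0 := (hpos.trans_le (hmono.ge_of_tendsto hM t₀)).ne'
  have hone := (hM.comp (tendsto_id.const_mul_atTop hl)).div hM hM0
  rw [div_self hM0] at hone
  exact hK.ne' (tendsto_nhds_unique hlim hone)

lemma exists_monotone_rightInverse {α β : Type*} [ConditionallyCompleteLinearOrder α]
    [TopologicalSpace α] [OrderTopology α] [DenselyOrdered α] [LinearOrder β] [NoMaxOrder β]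
    [TopologicalSpace β] [OrderClosedTopology β] {c : α → β} (hmono : Monotone c)
    (hcont : Continuous c) (htop : Tendsto c atTop atTop) (a : α) :
    ∃ b : β → α, (∀ y, a ≤ b y) ∧ Monotone b ∧ Tendsto b atTop atTop ∧
      ∀ y, c a ≤ y → c (b y) = y := by
  have : Nonempty α := ⟨a⟩
  have hsurj : ∀ y, c a ≤ y → ∃ s, a ≤ s ∧ c s = y := by
    intro y hy
    obtain ⟨T, haT, hT⟩ := ((eventually_ge_atTop a).and (htop.eventually_ge_atTop y)).exists
    obtain ⟨s, hs, rfl⟩ := intermediate_value_Icc haT hcont.continuousOn ⟨hy, hT⟩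
    exact ⟨s, hs.1, rfl⟩
  choose! s has hs using hsurj
  have hcs : ∀ y, c (s (max y (c a))) = max y (c a) := fun y => hs _ (le_max_right _ _)
  refine ⟨fun y => s (max y (c a)), fun y => has _ (le_max_right _ _), fun y y' hyy' => ?_, ?_,
    fun y hy => by simp only [max_eq_left hy, hs y hy]⟩
  · rcases (max_le_max_right (c a) hyy').eq_or_lt with heq | hlt
    · simp only [heq, le_refl]
    · rw [← hcs y, ← hcs y'] at hlt
      exact (hmono.reflect_lt hlt).le
  · refine tendsto_atTop.2 fun T => ?_
    filter_upwards [eventually_gt_atTop (c T)] with y hy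
    refine (hmono.reflect_lt ?_).le
    exact (hcs y).symm ▸ hy.trans_le (le_max_left _ _)

lemma exists_tendsto_div_one {b : ℕ → ℝ} (hb : Monotone b) (hbtop : Tendsto b atTop atTop)
    (hratio : Tendsto (fun n => b (n + 1) / b n) atTop (𝓝 1)) :
    ∃ N : ℝ → ℕ, Tendsto N atTop atTop ∧ (∀ᶠ t in atTop, b (N t) ≤ t) ∧
      Tendsto (fun t => t / b (N t)) atTop (𝓝 1) := by
  have hex : ∀ t, b 0 ≤ t → ∃ n, b n ≤ t ∧ t < b (n + 1) := by
    intro t ht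
    have hcover := iUnion_Ico_map_succ_eq_Ici (fun _ => hb bot_le)
      (not_bddAbove_of_tendsto_atTop hbtop)
    simpa using hcover.ge (mem_Ici.2 ht)
  choose! N hN using hex
  have hmem : ∀ᶠ t in atTop, b (N t) ≤ t ∧ t < b (N t + 1) :=
    (eventually_ge_atTop (b 0)).mono hN
  have hNtop : Tendsto N atTop atTop := by
    refine tendsto_atTop.2 fun k => ?_
    filter_upwards [hmem, eventually_ge_atTop (b k)] with t ht hk
    exact Nat.lt_succ_iff.1 (hb.reflect_lt (hk.trans_lt ht.2))
  refine ⟨N, hNtop, hmem.mono fun t ht => ht.1, ?_⟩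
  have hbN := (hbtop.comp hNtop).eventually_gt_atTop 0
  refine tendsto_of_tendsto_of_tendsto_of_le_of_le' tendsto_const_nhds (hratio.comp hNtop) ?_ ?_
  · filter_upwards [hmem, hbN] with t ht hpos using (one_le_div hpos).2 ht.1
  · filter_upwards [hmem, hbN] with t ht hpos using (div_le_div_iff_of_pos_right hpos).2 ht.2.le

end RealFunctions

section Scaling

variable {X : Type*} [MetricSpace X] {C : Set X} {sm : ℝ → X → X} {x : X} {t u : ℝ}

namespace ScaleAxioms

protected lemma one_smul (hsm : ScaleAxioms C sm) (x : X) : sm 1 x = x :=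
  hsm.2.1 x

protected lemma smul_smul (hsm : ScaleAxioms C sm) (ht : 0 < t) (hu : 0 < u) (x : X) :
    sm t (sm u x) = sm (t * u) x :=
  hsm.2.2.1 t u ht hu x

protected lemma smul_mem (hsm : ScaleAxioms C sm) (ht : 0 < t) (hx : x ∈ C) : sm t x ∈ C :=
  hsm.2.2.2.2 x hx t ht

lemma infDist_lt_infDist_smul (hsm : ScaleAxioms C sm) (ht : 1 < t) (hx : x ∉ C) :
    infDist x C < infDist (sm t x) C :=
  hsm.2.2.2.1 t ht x hx

protected lemma inv_smul_smul (hsm : ScaleAxioms C sm) (ht : 0 < t) (x : X) :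
    sm t⁻¹ (sm t x) = x := by
  rw [hsm.smul_smul (inv_pos.2 ht) ht, inv_mul_cancel₀ ht.ne', hsm.one_smul]

protected lemma smul_inv_smul (hsm : ScaleAxioms C sm) (ht : 0 < t) (x : X) :
    sm t (sm t⁻¹ x) = x := by
  rw [hsm.smul_smul ht (inv_pos.2 ht), mul_inv_cancel₀ ht.ne', hsm.one_smul]

lemma smul_notMem (hsm : ScaleAxioms C sm) (ht : 0 < t) (hx : x ∉ C) : sm t x ∉ C :=
  fun h => hx (hsm.inv_smul_smul ht x ▸ hsm.smul_mem (inv_pos.2 ht) h)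

lemma continuousOn_comp_smul (hsm : ScaleAxioms C sm) {Y : Type*} [TopologicalSpace Y] {s : Set Y}
    {g : Y → ℝ} {h : Y → X} (hg : ContinuousOn g s) (hh : ContinuousOn h s)
    (hpos : ∀ y ∈ s, 0 < g y) : ContinuousOn (fun y => sm (g y) (h y)) s :=
  hsm.1.comp (hg.prodMk hh) fun y hy => ⟨hpos y hy, mem_univ _⟩

lemma continuous_comp_smul (hsm : ScaleAxioms C sm) {Y : Type*} [TopologicalSpace Y] {g : Y → ℝ}
    {h : Y → X} (hg : Continuous g) (hh : Continuous h) (hpos : ∀ y, 0 < g y) :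
    Continuous fun y => sm (g y) (h y) :=
  continuousOn_univ.1 (hsm.continuousOn_comp_smul hg.continuousOn hh.continuousOn fun y _ => hpos y)

protected lemma continuous_smul (hsm : ScaleAxioms C sm) (ht : 0 < t) : Continuous (sm t) :=
  hsm.continuous_comp_smul continuous_const continuous_id fun _ => ht

protected lemma measurable_smul [MeasurableSpace X] [BorelSpace X] (hsm : ScaleAxioms C sm)
    (ht : 0 < t) : Measurable (sm t) :=
  (hsm.continuous_smul ht).measurable

lemma infDist_pos (hC : IsClosed C) (hsm : ScaleAxioms C sm) (hx : x ∉ C) : 0 < infDist x C := by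
  rcases C.eq_empty_or_nonempty with rfl | hne
  · simpa using hsm.infDist_lt_infDist_smul one_lt_two hx
  · exact (hC.notMem_iff_infDist_pos hne).1 hx

lemma strictMonoOn_infDist_smul (hsm : ScaleAxioms C sm) (hx : x ∉ C) :
    StrictMonoOn (fun u => infDist (sm u x) C) (Ioi 0) := by
  intro u (hu : 0 < u) t (ht : 0 < t) hut
  have h := hsm.infDist_lt_infDist_smul ((one_lt_div hu).2 hut) (hsm.smul_notMem hu hx)
  rwa [hsm.smul_smul (div_pos ht hu) hu, div_mul_cancel₀ _ hu.ne'] at h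

lemma monotoneOn_infDist_smul (hsm : ScaleAxioms C sm) (x : X) :
    MonotoneOn (fun u => infDist (sm u x) C) (Ioi 0) := by
  by_cases hx : x ∈ C
  · intro u hu _ _ _
    simp only [infDist_zero_of_mem (hsm.smul_mem hu hx), infDist_nonneg]
  · exact (hsm.strictMonoOn_infDist_smul hx).monotoneOn

lemma infDist_smul_le (hsm : ScaleAxioms C sm) (hu : 0 < u) (hu1 : u ≤ 1) (x : X) :
    infDist (sm u x) C ≤ infDist x C := by
  simpa only [hsm.one_smul] using hsm.monotoneOn_infDist_smul x hu (mem_Ioi.2 one_pos) hu1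

end ScaleAxioms

end Scaling

section Radial

/-- The radial test function of inner radius `r`: it vanishes at distance at most `r` from `C` and
is bounded and strictly increasing in the distance to `C` beyond `r`. -/
def radial {X : Type*} [PseudoMetricSpace X] (C : Set X) (r : ℝ) (x : X) : ℝ :=
  Real.arctan (max (infDist x C - r) 0)

variable {X : Type*} [PseudoMetricSpace X] {C : Set X} {r s : ℝ} {x y : X}

lemma radial_nonneg (C : Set X) (r : ℝ) (x : X) : 0 ≤ radial C r x :=
  Real.arctan_nonneg.2 (le_max_right _ _)

lemma radial_pos_iff : 0 < radial C r x ↔ r < infDist x C := by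
  simp [radial]

lemma radial_eq_zero (h : infDist x C ≤ r) : radial C r x = 0 := by
  simp [radial, h]

lemma radial_le_radial (hrs : s ≤ r) (hxy : infDist x C ≤ infDist y C) :
    radial C r x ≤ radial C s y :=
  Real.arctan_mono (max_le_max_right 0 (sub_le_sub hxy hrs))

lemma radial_lt_radial (hxy : infDist x C < infDist y C) (hy : r < infDist y C) :
    radial C r x < radial C r y :=
  Real.arctan_strictMono ((max_lt (sub_lt_sub_right hxy r) (sub_pos.2 hy)).trans_le
    (le_max_left _ _))

lemma continuous_radial (C : Set X) (r : ℝ) : Continuous (radial C r) :=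
  Real.continuous_arctan.comp
    (((continuous_infDist_pt C).sub continuous_const).max continuous_const)

end Radial

section TestFunctions

variable {X : Type*} [MetricSpace X] {C : Set X} {sm : ℝ → X → X} {f : X → ℝ} {r u : ℝ}

lemma isCO_radial (C : Set X) (hr : 0 < r) : IsCO C (radial C r) :=
  ⟨(continuous_radial C r).continuousOn, radial_nonneg C r,
    ⟨Real.pi / 2, fun _ => (Real.arctan_lt_pi_div_two _).le⟩, r, hr, fun _ hx =>
      radial_eq_zero hx.le⟩

namespace IsCO

lemma nonneg (hf : IsCO C f) (x : X) : 0 ≤ f x :=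
  hf.2.1 x

protected lemma continuous (hC : IsClosed C) (hf : IsCO C f) : Continuous f := by
  obtain ⟨hcont, -, -, r, hr, hzero⟩ := hf
  refine continuous_iff_continuousAt.2 fun x => ?_
  by_cases hx : x ∈ C
  · have hnear : ∀ᶠ y in 𝓝 x, infDist y C < r :=
      (continuous_infDist_pt C).continuousAt.eventually_lt_const
        (by simpa only [infDist_zero_of_mem hx] using hr)
    exact (continuousAt_const (y := (0 : ℝ))).congr (hnear.mono fun y hy => (hzero y hy).symm)
  · exact hcont.continuousAt (hC.isOpen_compl.mem_nhds hx)

lemma comp_smul (hC : IsClosed C) (hsm : ScaleAxioms C sm) (hf : IsCO C f) (hu : 0 < u)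
    (hu1 : u ≤ 1) : IsCO C fun x => f (sm u x) := by
  have hcont := (hf.continuous hC).comp (hsm.continuous_smul hu)
  obtain ⟨-, hnonneg, ⟨B, hB⟩, r, hr, hzero⟩ := hf
  exact ⟨hcont.continuousOn, fun x => hnonneg _, ⟨B, fun x => hB _⟩, r, hr, fun x hx =>
    hzero _ ((hsm.infDist_smul_le hu hu1 x).trans_lt hx)⟩

variable [MeasurableSpace X]

protected lemma stronglyMeasurable [BorelSpace X] (hC : IsClosed C) (hf : IsCO C f) :
    StronglyMeasurable f :=
  (hf.continuous hC).stronglyMeasurable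

protected lemma integrable [BorelSpace X] {μ : Measure X} (hC : IsClosed C) (hf : IsCO C f)
    (hμ : MemMO C μ) :
    Integrable f μ := by
  have hmeas := (hf.stronglyMeasurable hC).aestronglyMeasurable (μ := μ)
  obtain ⟨-, hnonneg, ⟨B, hB⟩, r, hr, hzero⟩ := hf
  have hsupp : Function.support f ⊆ {x | r ≤ infDist x C} := fun x hx =>
    not_lt.1 fun hlt => hx (hzero x hlt)
  rw [← integrableOn_iff_integrable_of_support_subset hsupp]
  refine Measure.integrableOn_of_bounded (M := B) (hμ.2 r hr).ne hmeas (ae_of_all _ fun x => ?_)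
  rw [Real.norm_of_nonneg (hnonneg x)]
  exact hB x

end IsCO

lemma MemMO.smul [MeasurableSpace X] {μ : Measure X} {k : ℝ≥0∞} (hμ : MemMO C μ)
    (hk : k ≠ ⊤) : MemMO C (k • μ) := by
  refine ⟨by simp [hμ.1], fun r hr => ?_⟩
  rw [Measure.smul_apply, smul_eq_mul]
  exact ENNReal.mul_lt_top hk.lt_top (hμ.2 r hr)

lemma measure_smul_ne_zero {Ω : Type*} [MeasurableSpace Ω] {μ : Measure Ω} {k : ℝ≥0∞} (hk : k ≠ 0)
    (hμ : μ ≠ 0) : k • μ ≠ 0 := by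
  rw [Ne, ← Measure.measure_univ_eq_zero, Measure.smul_apply, smul_eq_mul, mul_eq_zero,
    Measure.measure_univ_eq_zero]
  exact not_or.2 ⟨hk, hμ⟩

end TestFunctions

section Scaled

/-- The rescaled measure `ν(t·)`, encoded as the pushforward of `ν` under multiplication by
`t⁻¹`. -/
def scaled {X : Type*} [MeasurableSpace X] (sm : ℝ → X → X) (ν : Measure X) (t : ℝ) : Measure X :=
  ν.map (sm t⁻¹)

variable [BorelSpace S] {C : Set S} {sm : ℝ → S → S} {μ ν : Measure S} {f : S → ℝ} {s t : ℝ}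
  {E : Set S}

lemma integral_scaled (hC : IsClosed C) (hsm : ScaleAxioms C sm) (hf : IsCO C f) (ht : 0 < t)
    (ν : Measure S) : ∫ x, f x ∂scaled sm ν t = ∫ x, f (sm t⁻¹ x) ∂ν :=
  integral_map_of_stronglyMeasurable (hsm.measurable_smul (inv_pos.2 ht)) (hf.stronglyMeasurable hC)

lemma scaled_apply (hsm : ScaleAxioms C sm) (ht : 0 < t) (hE : MeasurableSet E) (ν : Measure S) :
    scaled sm ν t E = ν (sm t '' E) := by
  rw [scaled, Measure.map_apply (hsm.measurable_smul (inv_pos.2 ht)) hE,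
    image_eq_preimage_of_inverse (hsm.inv_smul_smul ht) (hsm.smul_inv_smul ht)]

lemma scaled_scaled (hsm : ScaleAxioms C sm) (hs : 0 < s) (ht : 0 < t) (ν : Measure S) :
    scaled sm (scaled sm ν s) t = scaled sm ν (t * s) := by
  rw [scaled, scaled, Measure.map_map (hsm.measurable_smul (inv_pos.2 ht))
    (hsm.measurable_smul (inv_pos.2 hs)), scaled, mul_inv]
  congr 1
  exact funext fun x => hsm.smul_smul (inv_pos.2 ht) (inv_pos.2 hs) x

lemma scaled_smul_scaled (hsm : ScaleAxioms C sm) (hs : 0 < s) (ht : 0 < t) (k : ℝ≥0∞)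
    (ν : Measure S) : scaled sm (k • scaled sm ν s) t = k • scaled sm ν (t * s) := by
  rw [← scaled_scaled hsm hs ht]
  exact Measure.map_smul k _ _

lemma scaled_ne_zero (hsm : ScaleAxioms C sm) (ht : 0 < t) (hμ : μ ≠ 0) : scaled sm μ t ≠ 0 :=
  (Measure.map_eq_zero_iff (hsm.measurable_smul (inv_pos.2 ht)).aemeasurable).not.2 hμ

lemma MemMO.scaled (hC : IsClosed C) (hsm : ScaleAxioms C sm) (hν : MemMO C ν) (ht : 1 ≤ t) :
    MemMO C (scaled sm ν t) := by
  have ht0 : 0 < t⁻¹ := by positivity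
  have hmeas := hsm.measurable_smul ht0
  refine ⟨?_, fun r hr => ?_⟩
  · rw [_root_.scaled, Measure.map_apply hmeas hC.measurableSet]
    exact measure_mono_null (fun x hx => not_imp_not.1 (hsm.smul_notMem ht0) hx) hν.1
  · rw [_root_.scaled,
      Measure.map_apply hmeas (measurableSet_le measurable_const measurable_infDist)]
    refine (measure_mono fun x hx => ?_).trans_lt (hν.2 r hr)
    exact le_trans hx (hsm.infDist_smul_le ht0 (inv_le_one_of_one_le₀ ht) x)

end Scaled

section Convergence

/-- Convergence `ν i → μ` in `M_O` along an arbitrary filter `L`. -/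
def TendstoMO {ι : Type*} (C : Set S) (ν : ι → Measure S) (L : Filter ι) (μ : Measure S) : Prop :=
  ∀ f : S → ℝ, IsCO C f → Tendsto (fun i => ∫ x, f x ∂ν i) L (𝓝 (∫ x, f x ∂μ))

namespace TendstoMO

variable {ι κ : Type*} {L : Filter ι} {M : Filter κ} {C : Set S} {sm : ℝ → S → S}
  {ν ν' : ι → Measure S} {μ : Measure S} {k : ι → ℝ≥0∞}

lemma comp (h : TendstoMO C ν L μ) {g : κ → ι} (hg : Tendsto g M L) :
    TendstoMO C (fun j => ν (g j)) M μ :=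
  fun f hf => (h f hf).comp hg

lemma congr' (h : TendstoMO C ν L μ) (hν : ν =ᶠ[L] ν') : TendstoMO C ν' L μ :=
  fun f hf => (h f hf).congr' (hν.mono fun i hi => by rw [hi])

lemma smul (h : TendstoMO C ν L μ) {K : ℝ≥0∞} (hk : Tendsto k L (𝓝 K)) (hK : K ≠ ⊤) :
    TendstoMO C (fun i => k i • ν i) L (K • μ) := by
  intro f hf
  simp only [integral_smul_measure]
  exact ((ENNReal.tendsto_toReal hK).comp hk).smul (h f hf)

lemma normalize {a : ι → ℝ} {K : ℝ} (h : TendstoMO C (fun i => k i • ν i) L μ)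
    (ha : Tendsto (fun i => (k i).toReal * a i) L (𝓝 K)) (hK : 0 < K) :
    TendstoMO C (fun i => ENNReal.ofReal (a i)⁻¹ • ν i) L (ENNReal.ofReal K⁻¹ • μ) := by
  intro f hf
  simp only [TendstoMO, integral_smul_measure, smul_eq_mul] at h ⊢
  rw [ENNReal.toReal_ofReal (inv_pos.2 hK).le, ← div_eq_inv_mul]
  refine ((h f hf).div ha hK.ne').congr' ?_
  filter_upwards [ha.eventually_const_lt hK] with i hi
  have hki : 0 < (k i).toReal := ENNReal.toReal_nonneg.lt_of_ne' (left_ne_zero_of_mul hi.ne')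
  have hai : 0 < a i := (mul_pos_iff_of_pos_left hki).1 hi
  rw [ENNReal.toReal_ofReal (inv_pos.2 hai).le, Pi.div_apply, mul_div_mul_left _ _ hki.ne',
    div_eq_inv_mul]

protected lemma scaled [BorelSpace S] (hC : IsClosed C) (hsm : ScaleAxioms C sm)
    (h : TendstoMO C ν L μ) {l : ℝ} (hl : 1 ≤ l) :
    TendstoMO C (fun i => scaled sm (ν i) l) L (scaled sm μ l) := by
  intro f hf
  have hl0 : 0 < l := one_pos.trans_le hl
  simp only [integral_scaled hC hsm hf hl0]
  exact h _ (hf.comp_smul hC hsm (inv_pos.2 hl0) (inv_le_one_of_one_le₀ hl))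

end TendstoMO

end Convergence

section RadialIntegrals

variable [BorelSpace S] {C : Set S} {sm : ℝ → S → S} {μ ν : Measure S} {r l : ℝ}

lemma integral_radial_pos_iff (hC : IsClosed C) (hμ : MemMO C μ) (hr : 0 < r) :
    0 < ∫ x, radial C r x ∂μ ↔ 0 < μ {x | r < infDist x C} := by
  have hsupp : Function.support (radial C r) = {x | r < infDist x C} := by
    ext x
    exact (radial_nonneg C r x).lt_iff_ne'.symm.trans radial_pos_iff
  rw [integral_pos_iff_support_of_nonneg (radial_nonneg C r)
    ((isCO_radial C hr).integrable hC hμ), hsupp]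

lemma eventually_integral_radial_pos (hC : IsClosed C) (hsm : ScaleAxioms C sm) (hμ : MemMO C μ)
    (hμ0 : μ ≠ 0) : ∀ᶠ r in 𝓝[>] 0, 0 < ∫ x, radial C r x ∂μ := by
  have hcover : Cᶜ ⊆ ⋃ n : ℕ, {x | 1 / ((n : ℝ) + 1) < infDist x C} := fun x hx =>
    mem_iUnion.2 (exists_nat_one_div_lt (hsm.infDist_pos hC hx))
  obtain ⟨n, hn⟩ : ∃ n : ℕ, μ {x | 1 / ((n : ℝ) + 1) < infDist x C} ≠ 0 := by
    by_contra! hzero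
    have hnull : μ Cᶜ = 0 := measure_mono_null hcover (measure_iUnion_null hzero)
    refine hμ0 (Measure.measure_univ_eq_zero.1 ?_)
    exact union_compl_self C ▸ measure_union_null hμ.1 hnull
  filter_upwards [Ioc_mem_nhdsGT (show 0 < 1 / ((n : ℝ) + 1) by positivity)] with r hr
  rw [integral_radial_pos_iff hC hμ hr.1]
  exact (pos_iff_ne_zero.2 hn).trans_le (measure_mono fun x hx => hr.2.trans_lt hx)

lemma integral_radial_scaled_lt (hC : IsClosed C) (hsm : ScaleAxioms C sm) (hμ : MemMO C μ)
    (hr : 0 < r) (hpos : 0 < ∫ x, radial C r x ∂μ) (hl : 1 < l) :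
    ∫ x, radial C r x ∂scaled sm μ l < ∫ x, radial C r x ∂μ := by
  have hl0 : 0 < l := one_pos.trans hl
  have hl1 : l⁻¹ < 1 := inv_lt_one_of_one_lt₀ hl
  have hrad := isCO_radial C hr
  have hint := hrad.integrable hC hμ
  have hint' := (hrad.comp_smul hC hsm (inv_pos.2 hl0) hl1.le).integrable hC hμ
  have hstrict : ∀ x, r < infDist x C → radial C r (sm l⁻¹ x) < radial C r x := by
    intro x hx
    have hxC : x ∉ C := fun h => (hr.trans hx).ne' (infDist_zero_of_mem h)
    refine radial_lt_radial ?_ hx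
    simpa only [hsm.one_smul] using
      hsm.strictMonoOn_infDist_smul hxC (inv_pos.2 hl0) (mem_Ioi.2 one_pos) hl1
  rw [integral_scaled hC hsm hrad hl0, ← sub_pos, ← integral_sub hint hint',
    integral_pos_iff_support_of_nonneg (fun x => sub_nonneg.2 (radial_le_radial le_rfl
      (hsm.infDist_smul_le (inv_pos.2 hl0) hl1.le x))) (hint.sub hint')]
  exact ((integral_radial_pos_iff hC hμ hr).1 hpos).trans_le
    (measure_mono fun x hx => (sub_pos.2 (hstrict x hx)).ne')

lemma antitoneOn_integral_radial_scaled (hC : IsClosed C) (hsm : ScaleAxioms C sm)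
    (hν : MemMO C ν) (hr : 0 < r) :
    AntitoneOn (fun t => ∫ x, radial C r x ∂scaled sm ν t) (Ici 1) := by
  intro s (hs : 1 ≤ s) t (ht : 1 ≤ t) hst
  have hrad := isCO_radial C hr
  have hs0 : 0 < s := one_pos.trans_le hs
  have ht0 : 0 < t := one_pos.trans_le ht
  simp only [integral_scaled hC hsm hrad hs0, integral_scaled hC hsm hrad ht0]
  refine integral_mono
    ((hrad.comp_smul hC hsm (inv_pos.2 ht0) (inv_le_one_of_one_le₀ ht)).integrable hC hν)
    ((hrad.comp_smul hC hsm (inv_pos.2 hs0) (inv_le_one_of_one_le₀ hs)).integrable hC hν)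
    fun x => radial_le_radial le_rfl ?_
  exact hsm.monotoneOn_infDist_smul x (inv_pos.2 ht0) (inv_pos.2 hs0) (inv_anti₀ hs0 hst)

lemma continuousOn_integral_radial_scaled (hC : IsClosed C) (hsm : ScaleAxioms C sm)
    (hν : MemMO C ν) (hr : 0 < r) :
    ContinuousOn (fun t => ∫ x, radial C r x ∂scaled sm ν t) (Ici 1) := by
  have hrad := isCO_radial C hr
  have hpos : ∀ t ∈ Ici (1 : ℝ), 0 < t := fun t ht => one_pos.trans_le ht
  refine ContinuousOn.congr (f := fun t => ∫ x, radial C r (sm t⁻¹ x) ∂ν) ?_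
    fun t ht => integral_scaled hC hsm hrad (hpos t ht) ν
  refine continuousOn_of_dominated (bound := radial C r) (fun t ht => ?_)
    (fun t ht => ae_of_all _ fun x => ?_) (hrad.integrable hC hν) (ae_of_all _ fun x => ?_)
  · exact ((continuous_radial C r).comp
      (hsm.continuous_smul (inv_pos.2 (hpos t ht)))).aestronglyMeasurable
  · rw [Real.norm_of_nonneg (radial_nonneg C r _)]
    exact radial_le_radial le_rfl
      (hsm.infDist_smul_le (inv_pos.2 (hpos t ht)) (inv_le_one_of_one_le₀ ht) x)
  · exact (continuous_radial C r).comp_continuousOn (hsm.continuousOn_comp_smul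
      (continuousOn_inv₀.mono fun t ht => (hpos t ht).ne') continuousOn_const
      fun t ht => inv_pos.2 (hpos t ht))

lemma TendstoMO.ne_zero (hC : IsClosed C) (hsm : ScaleAxioms C sm) (hμ : MemMO C μ) (hμ0 : μ ≠ 0)
    {ι : Type*} {L : Filter ι} [L.NeBot] {k : ι → ℝ≥0∞} {s : ι → ℝ}
    (h : TendstoMO C (fun i => k i • scaled sm ν (s i)) L μ) : ν ≠ 0 := by
  rintro rfl
  obtain ⟨r, hI, hr⟩ :=
    ((eventually_integral_radial_pos hC hsm hμ hμ0).and eventually_mem_nhdsWithin).exists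
  have hzero := h _ (isCO_radial C hr)
  simp only [scaled, Measure.map_zero, smul_zero, integral_zero_measure] at hzero
  exact hI.ne (tendsto_nhds_unique tendsto_const_nhds hzero)

end RadialIntegrals

section Dilation

/-- The oscillation of `f` along the orbit segment `{e⁻ᵛ x : 0 ≤ v ≤ δ}`. It bounds the effect on
`f` of every dilation by a factor in `[1, e^δ]`, and is a test function whenever `f` is. The
exponential parametrization makes the supremum run over a compact set on which the dilation is
defined for all real parameters. -/
def orbitOsc {X : Type*} (sm : ℝ → X → X) (f : X → ℝ) (δ : ℝ) (x : X) : ℝ :=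
  sSup ((fun v => |f (sm (Real.exp (-v)) x) - f x|) '' Icc 0 δ)

section OrbitOsc

variable {X : Type*} {sm : ℝ → X → X} {f : X → ℝ} {x : X} {δ b : ℝ}

lemma orbitOsc_nonneg (sm : ℝ → X → X) (f : X → ℝ) (δ : ℝ) (x : X) : 0 ≤ orbitOsc sm f δ x :=
  Real.sSup_nonneg (forall_mem_image.2 fun _ _ => abs_nonneg _)

lemma orbitOsc_le (hb : 0 ≤ b) (h : ∀ v ∈ Icc 0 δ, |f (sm (Real.exp (-v)) x) - f x| ≤ b) :
    orbitOsc sm f δ x ≤ b :=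
  Real.sSup_le (forall_mem_image.2 h) hb

variable [MetricSpace X] {C : Set X}

lemma continuous_orbit_sub (hC : IsClosed C) (hsm : ScaleAxioms C sm) (hf : IsCO C f) :
    Continuous fun p : X × ℝ => |f (sm (Real.exp (-p.2)) p.1) - f p.1| := by
  have hfc := hf.continuous hC
  have hdil := hsm.continuous_comp_smul (g := fun p : X × ℝ => Real.exp (-p.2))
    (Real.continuous_exp.comp continuous_snd.neg) continuous_fst fun _ => Real.exp_pos _
  exact ((hfc.comp hdil).sub (hfc.comp continuous_fst)).abs

lemma abs_orbit_sub_le_orbitOsc (hC : IsClosed C) (hsm : ScaleAxioms C sm) (hf : IsCO C f) {v : ℝ}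
    (hv : v ∈ Icc 0 δ) (x : X) : |f (sm (Real.exp (-v)) x) - f x| ≤ orbitOsc sm f δ x := by
  have hcont : Continuous fun v => |f (sm (Real.exp (-v)) x) - f x| :=
    (continuous_orbit_sub hC hsm hf).comp (Continuous.prodMk_right x)
  exact le_csSup (isCompact_Icc.image hcont).bddAbove (mem_image_of_mem _ hv)

lemma tendsto_orbitOsc (hC : IsClosed C) (hsm : ScaleAxioms C sm) (hf : IsCO C f) (x : X) :
    Tendsto (fun δ => orbitOsc sm f δ x) (𝓝[>] 0) (𝓝 0) := by
  have hcont : Continuous fun v => |f (sm (Real.exp (-v)) x) - f x| :=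
    (continuous_orbit_sub hC hsm hf).comp (Continuous.prodMk_right x)
  have hzero : Tendsto (fun v => |f (sm (Real.exp (-v)) x) - f x|) (𝓝 0) (𝓝 0) := by
    simpa [hsm.one_smul] using hcont.tendsto 0
  refine tendsto_order.2 ⟨fun a ha => .of_forall fun δ => ha.trans_le (orbitOsc_nonneg _ _ _ _),
    fun ε hε => ?_⟩
  obtain ⟨η, hη, hball⟩ :=
    Metric.eventually_nhds_iff.1 (hzero.eventually_lt_const (half_pos hε))
  filter_upwards [Ioo_mem_nhdsGT hη] with δ hδ
  refine (orbitOsc_le (half_pos hε).le fun v hv => (hball ?_).le).trans_lt (half_lt_self hε)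
  rw [Real.dist_0_eq_abs, abs_of_nonneg hv.1]
  exact hv.2.trans_lt hδ.2

lemma isCO_orbitOsc (hC : IsClosed C) (hsm : ScaleAxioms C sm) (hf : IsCO C f) (δ : ℝ) :
    IsCO C (orbitOsc sm f δ) := by
  have hcont : Continuous (orbitOsc sm f δ) :=
    (isCompact_Icc (a := (0 : ℝ)) (b := δ)).continuous_sSup
      (f := fun x v => |f (sm (Real.exp (-v)) x) - f x|) (continuous_orbit_sub hC hsm hf)
  obtain ⟨-, hnonneg, ⟨B, hB⟩, r, hr, hzero⟩ := hf
  refine ⟨hcont.continuousOn, orbitOsc_nonneg sm f δ, ⟨|B|, fun x => ?_⟩, r, hr, fun x hx => ?_⟩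
  · refine orbitOsc_le (abs_nonneg B) fun v _ => ?_
    exact abs_sub_le_of_nonneg_of_le (hnonneg _) ((hB _).trans (le_abs_self B)) (hnonneg _)
      ((hB _).trans (le_abs_self B))
  · refine (orbitOsc_le le_rfl fun v hv => ?_).antisymm (orbitOsc_nonneg sm f δ x)
    have hle := hsm.infDist_smul_le (Real.exp_pos (-v)) (by simpa using hv.1) x
    simp [hzero x hx, hzero _ (hle.trans_lt hx)]

lemma tendsto_integral_orbitOsc [MeasurableSpace X] [BorelSpace X] {μ : Measure X}
    (hC : IsClosed C) (hsm : ScaleAxioms C sm) (hf : IsCO C f) (hμ : MemMO C μ) :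
    Tendsto (fun δ => ∫ x, orbitOsc sm f δ x ∂μ) (𝓝[>] 0) (𝓝 0) := by
  have hint : ∀ δ, Integrable (orbitOsc sm f δ) μ := fun δ =>
    (isCO_orbitOsc hC hsm hf δ).integrable hC hμ
  suffices h : Tendsto (fun δ => ∫ x, orbitOsc sm f δ x ∂μ) (𝓝[>] 0) (𝓝 (∫ _, 0 ∂μ)) by
    simpa only [integral_zero] using h
  refine tendsto_integral_filter_of_dominated_convergence (orbitOsc sm f 1)
    (.of_forall fun δ => (hint δ).aestronglyMeasurable) ?_ (hint 1)
    (ae_of_all _ (tendsto_orbitOsc hC hsm hf))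
  filter_upwards [Ioo_mem_nhdsGT one_pos] with δ hδ
  refine ae_of_all _ fun x => ?_
  rw [Real.norm_of_nonneg (orbitOsc_nonneg sm f δ x)]
  exact orbitOsc_le (orbitOsc_nonneg _ _ _ _) fun v hv =>
    abs_orbit_sub_le_orbitOsc hC hsm hf ⟨hv.1, hv.2.trans hδ.2.le⟩ x

end OrbitOsc

variable [BorelSpace S] {C : Set S} {sm : ℝ → S → S} {f : S → ℝ}

lemma dist_integral_scaled_le (hC : IsClosed C) (hsm : ScaleAxioms C sm) (hf : IsCO C f)
    {ν : Measure S} (hν : MemMO C ν) {q δ : ℝ} (hq : 1 ≤ q) (hqδ : q ≤ Real.exp δ) :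
    dist (∫ x, f x ∂ν) (∫ x, f x ∂scaled sm ν q) ≤ ∫ x, orbitOsc sm f δ x ∂ν := by
  have hq0 : 0 < q := one_pos.trans_le hq
  have hint := hf.integrable hC hν
  have hint' :=
    (hf.comp_smul hC hsm (inv_pos.2 hq0) (inv_le_one_of_one_le₀ hq)).integrable hC hν
  have hlog : Real.log q ∈ Icc 0 δ := ⟨Real.log_nonneg hq, (Real.log_le_iff_le_exp hq0).2 hqδ⟩
  rw [dist_comm, Real.dist_eq, integral_scaled hC hsm hf hq0, ← integral_sub hint' hint]
  refine abs_integral_le_integral_abs.trans (integral_mono (hint'.sub hint).abs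
    ((isCO_orbitOsc hC hsm hf δ).integrable hC hν) fun x => ?_)
  simpa only [Real.exp_neg, Real.exp_log hq0] using abs_orbit_sub_le_orbitOsc hC hsm hf hlog x

lemma TendstoMO.scaled_of_tendsto_one (hC : IsClosed C) (hsm : ScaleAxioms C sm) {ι : Type*}
    {L : Filter ι} {ν : ι → Measure S} {μ : Measure S} {q : ι → ℝ} (h : TendstoMO C ν L μ)
    (hν : ∀ᶠ i in L, MemMO C (ν i)) (hμ : MemMO C μ) (hq : ∀ᶠ i in L, 1 ≤ q i)
    (hq1 : Tendsto q L (𝓝 1)) : TendstoMO C (fun i => _root_.scaled sm (ν i) (q i)) L μ := by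
  intro f hf
  refine (h f hf).congr_dist (tendsto_order.2 ⟨fun a ha => .of_forall fun i =>
    ha.trans_le dist_nonneg, fun ε hε => ?_⟩)
  obtain ⟨δ, hδε, hδ⟩ := (((tendsto_integral_orbitOsc hC hsm hf hμ).eventually_lt_const hε).and
    eventually_mem_nhdsWithin).exists
  filter_upwards [hν, hq, hq1.eventually_lt_const (Real.one_lt_exp_iff.2 hδ),
    (h _ (isCO_orbitOsc hC hsm hf δ)).eventually_lt_const hδε] with i hνi hqi hqδ hlt
  exact (dist_integral_scaled_le hC hsm hf hνi hqi hqδ.le).trans_lt hlt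

end Dilation

section RegularVariation

/-- Regular variation of `ν`, with no constraint on the normalization: `k(t) ν(t·) → μ` in `M_O` as
`t → ∞`, for some nonzero `μ ∈ M_O`. -/
def IsRegVarMeasure (C : Set S) (sm : ℝ → S → S) (ν : Measure S) : Prop :=
  ∃ μ : Measure S, μ ≠ 0 ∧ MemMO C μ ∧
    ∃ k : ℝ → ℝ≥0∞, TendstoMO C (fun t => k t • scaled sm ν t) atTop μ

variable [BorelSpace S] {C : Set S} {sm : ℝ → S → S} {μ ν : Measure S}

lemma TendstoMO.integral_radial_scaled_pos (hC : IsClosed C) (hsm : ScaleAxioms C sm)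
    (hν : MemMO C ν) {k : ℝ → ℝ≥0∞} (h : TendstoMO C (fun t => k t • scaled sm ν t) atTop μ)
    {r : ℝ} (hr : 0 < r) (hI : 0 < ∫ x, radial C r x ∂μ) {t : ℝ} (ht : 1 ≤ t) :
    0 < ∫ x, radial C r x ∂scaled sm ν t := by
  have hev := (h _ (isCO_radial C hr)).eventually_const_lt hI
  obtain ⟨u, hu, htu⟩ := (hev.and (eventually_ge_atTop t)).exists
  rw [integral_smul_measure, smul_eq_mul] at hu
  refine lt_of_lt_of_le ?_ (antitoneOn_integral_radial_scaled hC hsm hν hr ht (ht.trans htu) htu)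
  exact (integral_nonneg (radial_nonneg C r)).lt_of_ne' (right_ne_zero_of_mul hu.ne')

lemma IsRegVarMeasure.exists_normalizer (hC : IsClosed C) (hsm : ScaleAxioms C sm)
    (hν : MemMO C ν) (h : IsRegVarMeasure C sm ν) :
    ∃ μ : Measure S, μ ≠ 0 ∧ MemMO C μ ∧ ∃ c : ℝ → ℝ, (∀ t, 0 < c t) ∧ Monotone c ∧
      Continuous c ∧ TendstoMO C (fun t => ENNReal.ofReal (c t) • scaled sm ν t) atTop μ := by
  obtain ⟨μ, hμ0, hμ, k, hk⟩ := h
  obtain ⟨r, hI, hr⟩ :=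
    ((eventually_integral_radial_pos hC hsm hμ hμ0).and eventually_mem_nhdsWithin).exists
  set F : ℝ → ℝ := fun t => ∫ x, radial C r x ∂scaled sm ν t
  have hFpos : ∀ t, 0 < F (max t 1) := fun t =>
    hk.integral_radial_scaled_pos hC hsm hν hr hI (le_max_right t 1)
  have hFanti : Antitone fun t => F (max t 1) := fun s t hst =>
    antitoneOn_integral_radial_scaled hC hsm hν hr (le_max_right s 1) (le_max_right t 1)
      (max_le_max_right 1 hst)
  have hFcont : Continuous fun t => F (max t 1) :=
    (continuousOn_integral_radial_scaled hC hsm hν hr).comp_continuous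
      (continuous_id.max continuous_const) fun t => le_max_right t 1
  have hkF : Tendsto (fun t => (k t).toReal * F t) atTop (𝓝 (∫ x, radial C r x ∂μ)) := by
    simpa only [integral_smul_measure, smul_eq_mul] using hk _ (isCO_radial C hr)
  refine ⟨_, measure_smul_ne_zero (ENNReal.ofReal_pos.2 (inv_pos.2 hI)).ne' hμ0,
    hμ.smul ENNReal.ofReal_ne_top, fun t => (F (max t 1))⁻¹, fun t => inv_pos.2 (hFpos t),
    fun s t hst => inv_anti₀ (hFpos t) (hFanti hst), hFcont.inv₀ fun t => (hFpos t).ne',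
    (hk.normalize hkF hI).congr' ?_⟩
  filter_upwards [eventually_ge_atTop 1] with t ht
  rw [max_eq_left ht]

section Normalizer

variable {c : ℝ → ℝ}

lemma TendstoMO.exists_tendsto_div (hC : IsClosed C) (hsm : ScaleAxioms C sm) (hμ : MemMO C μ)
    (hμ0 : μ ≠ 0) (hc : ∀ t, 0 < c t)
    (h : TendstoMO C (fun t => ENNReal.ofReal (c t) • scaled sm ν t) atTop μ) {l : ℝ}
    (hl : 1 < l) : ∃ K > 1, Tendsto (fun t => c (l * t) / c t) atTop (𝓝 K) := by
  have hl0 : 0 < l := one_pos.trans hl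
  obtain ⟨r, ⟨hI, hJ⟩, hr⟩ := (((eventually_integral_radial_pos hC hsm hμ hμ0).and
    (eventually_integral_radial_pos hC hsm (hμ.scaled hC hsm hl.le)
      (scaled_ne_zero hsm hl0 hμ0))).and eventually_mem_nhdsWithin).exists
  have hrad := isCO_radial C hr
  set F : ℝ → ℝ := fun t => ∫ x, radial C r x ∂scaled sm ν t
  have hnum : Tendsto (fun t => c (l * t) * F (l * t)) atTop (𝓝 (∫ x, radial C r x ∂μ)) := by
    simpa only [integral_smul_measure, smul_eq_mul, ENNReal.toReal_ofReal (hc _).le] using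
      h.comp (g := fun t => l * t) (tendsto_id.const_mul_atTop hl0) _ hrad
  have hden : Tendsto (fun t => c t * F (l * t)) atTop
      (𝓝 (∫ x, radial C r x ∂scaled sm μ l)) := by
    refine ((h.scaled hC hsm hl.le) _ hrad).congr' ?_
    filter_upwards [eventually_gt_atTop 0] with t ht
    rw [scaled_smul_scaled hsm ht hl0, integral_smul_measure, ENNReal.toReal_ofReal (hc t).le,
      smul_eq_mul]
  refine ⟨_, (one_lt_div hJ).2 (integral_radial_scaled_lt hC hsm hμ hr hI hl),
    (hnum.div hden hJ.ne').congr' ?_⟩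
  filter_upwards [hden.eventually_const_lt hJ] with t ht
  exact mul_div_mul_right _ _ (right_ne_zero_of_mul ht.ne')

lemma TendstoMO.regVarFun (hC : IsClosed C) (hsm : ScaleAxioms C sm) (hμ : MemMO C μ)
    (hμ0 : μ ≠ 0) (hc : ∀ t, 0 < c t) (hmono : Monotone c)
    (h : TendstoMO C (fun t => ENNReal.ofReal (c t) • scaled sm ν t) atTop μ) : RegVarFun c := by
  refine ⟨fun t _ => hc t, hmono.measurable,
    exists_tendsto_div_rpow (hmono.monotoneOn _) (fun t _ => hc t) fun l hl => ?_⟩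
  obtain ⟨K, hK, hlim⟩ := h.exists_tendsto_div hC hsm hμ hμ0 hc hl
  exact ⟨K, one_pos.trans hK, hlim⟩

lemma TendstoMO.tendsto_normalizer_atTop (hC : IsClosed C) (hsm : ScaleAxioms C sm)
    (hμ : MemMO C μ) (hμ0 : μ ≠ 0) (hc : ∀ t, 0 < c t) (hmono : Monotone c)
    (h : TendstoMO C (fun t => ENNReal.ofReal (c t) • scaled sm ν t) atTop μ) :
    Tendsto c atTop atTop := by
  obtain ⟨K, hK, hlim⟩ := h.exists_tendsto_div hC hsm hμ hμ0 hc one_lt_two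
  exact tendsto_atTop_of_tendsto_div hmono (hc 0) two_pos hK hlim

end Normalizer

end RegularVariation

section Sequences

variable [BorelSpace S] {C : Set S} {sm : ℝ → S → S} {μ ν : Measure S}

lemma isRegVarMeasure_of_seq (hC : IsClosed C) (hsm : ScaleAxioms C sm) (hν : MemMO C ν)
    (hμ : MemMO C μ) (hμ0 : μ ≠ 0) {k : ℕ → ℝ≥0∞} (hk : ∀ n, k n ≠ ⊤) {b : ℕ → ℝ}
    (hb : Monotone b) (hbtop : Tendsto b atTop atTop)
    (hratio : Tendsto (fun n => b (n + 1) / b n) atTop (𝓝 1))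
    (h : TendstoMO C (fun n => k n • scaled sm ν (b n)) atTop μ) : IsRegVarMeasure C sm ν := by
  obtain ⟨N, hN, hbN, hq1⟩ := exists_tendsto_div_one hb hbtop hratio
  have hone := (hbtop.comp hN).eventually_ge_atTop 1
  refine ⟨μ, hμ0, hμ, k ∘ N, ((h.comp hN).scaled_of_tendsto_one hC hsm ?_ hμ ?_ hq1).congr' ?_⟩
  · filter_upwards [hone] with t ht
    exact (hν.scaled hC hsm ht).smul (hk _)
  · filter_upwards [hone, hbN] with t ht hle
    exact (one_le_div (one_pos.trans_le ht)).2 hle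
  · filter_upwards [hone, eventually_gt_atTop 0] with t ht ht0
    have hpos : 0 < b (N t) := one_pos.trans_le ht
    rw [scaled_smul_scaled hsm hpos (div_pos ht0 hpos), div_mul_cancel₀ _ hpos.ne',
      Function.comp_apply]

lemma isRegVarMeasure_of_smul_natCast (hC : IsClosed C) (hsm : ScaleAxioms C sm) (hν : MemMO C ν)
    (hμ : MemMO C μ) (hμ0 : μ ≠ 0) {k : ℕ → ℝ≥0∞} (hk : ∀ n, k n ≠ ⊤)
    (h : TendstoMO C (fun n : ℕ => k n • scaled sm ν n) atTop μ) : IsRegVarMeasure C sm ν := by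
  refine isRegVarMeasure_of_seq hC hsm hν hμ hμ0 hk Nat.mono_cast tendsto_natCast_atTop_atTop ?_ h
  simpa using (tendsto_natCast_div_add_atTop (1 : ℝ)).inv₀ one_ne_zero

section Scales

variable {ι : Type*} {L : Filter ι} {k : ι → ℝ≥0∞} {s s' : ι → ℝ}

lemma TendstoMO.tendsto_scale_atTop [L.NeBot] (hC : IsClosed C) (hsm : ScaleAxioms C sm)
    (hν : MemMO C ν) (hμ : MemMO C μ) (hμ0 : μ ≠ 0)
    (hk : Tendsto (fun i => (k i).toReal) L atTop) (hs : ∀ᶠ i in L, 1 ≤ s i)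
    (h : TendstoMO C (fun i => k i • scaled sm ν (s i)) L μ) : Tendsto s L atTop := by
  refine tendsto_atTop.2 fun T => ?_
  have hT : 1 ≤ max T 1 := le_max_right T 1
  obtain ⟨r, hJ, hr⟩ := ((eventually_integral_radial_pos hC hsm (hν.scaled hC hsm hT)
    (scaled_ne_zero hsm (one_pos.trans_le hT) (h.ne_zero hC hsm hμ hμ0))).and
    eventually_mem_nhdsWithin).exists
  have hlim := h _ (isCO_radial C hr)
  simp only [integral_smul_measure, smul_eq_mul] at hlim
  filter_upwards [hs, (hk.atTop_mul_const hJ).eventually_gt_atTop _,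
    hlim.eventually_lt_const (lt_add_one _)] with i hi hgt hlt
  by_contra! hsT
  exact (hlt.trans hgt).not_ge (mul_le_mul_of_nonneg_left
    (antitoneOn_integral_radial_scaled hC hsm hν hr hi hT (hsT.le.trans (le_max_left T 1)))
    ENNReal.toReal_nonneg)

lemma TendstoMO.eventually_lt_mul (hC : IsClosed C) (hsm : ScaleAxioms C sm)
    (hν : MemMO C ν) (hμ : MemMO C μ) (hμ0 : μ ≠ 0) (hs : ∀ᶠ i in L, 1 ≤ s i)
    (h : TendstoMO C (fun i => k i • scaled sm ν (s i)) L μ)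
    (h' : TendstoMO C (fun i => k i • scaled sm ν (s' i)) L μ) {l : ℝ} (hl : 1 < l) :
    ∀ᶠ i in L, s' i < l * s i := by
  obtain ⟨r, hI, hr⟩ :=
    ((eventually_integral_radial_pos hC hsm hμ hμ0).and eventually_mem_nhdsWithin).exists
  have hrad := isCO_radial C hr
  obtain ⟨m, hm, hm'⟩ := exists_between (integral_radial_scaled_lt hC hsm hμ hr hI hl)
  filter_upwards [hs, (h' _ hrad).eventually_const_lt hm',
    (h.scaled hC hsm hl.le _ hrad).eventually_lt_const hm] with i hi hgt hlt
  rw [scaled_smul_scaled hsm (one_pos.trans_le hi) (one_pos.trans hl)] at hlt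
  simp only [integral_smul_measure, smul_eq_mul] at hlt hgt
  have hlsi : 1 ≤ l * s i := one_le_mul_of_one_le_of_one_le hl.le hi
  by_contra! hle
  exact (hlt.trans hgt).not_ge (mul_le_mul_of_nonneg_left
    (antitoneOn_integral_radial_scaled hC hsm hν hr hlsi (hlsi.trans hle) hle)
    ENNReal.toReal_nonneg)

end Scales

lemma TendstoMO.tendsto_div_one (hC : IsClosed C) (hsm : ScaleAxioms C sm) (hν : MemMO C ν)
    (hμ : MemMO C μ) (hμ0 : μ ≠ 0) {b : ℕ → ℝ} (hb : Monotone b) (hb1 : ∀ n, 1 ≤ b n)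
    (h : TendstoMO C (fun n : ℕ => (n : ℝ≥0∞) • scaled sm ν (b n)) atTop μ) :
    Tendsto (fun n => b (n + 1) / b n) atTop (𝓝 1) := by
  have hbpos : ∀ n, 0 < b n := fun n => one_pos.trans_le (hb1 n)
  have hone : Tendsto (fun n : ℕ => ENNReal.ofReal (n / (n + 1))) atTop (𝓝 1) := by
    simpa using ENNReal.tendsto_ofReal (tendsto_natCast_div_add_atTop (1 : ℝ))
  have hshift : TendstoMO C (fun n : ℕ => (n : ℝ≥0∞) • scaled sm ν (b (n + 1))) atTop μ := by
    have hsucc := (h.comp (tendsto_add_atTop_nat 1)).smul hone ENNReal.one_ne_top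
    rw [one_smul] at hsucc
    refine hsucc.congr' (.of_forall fun n => ?_)
    have hcancel : ENNReal.ofReal (n / (n + 1)) * ((n + 1 : ℕ) : ℝ≥0∞) = n := by
      rw [← ENNReal.ofReal_natCast (n + 1), ← ENNReal.ofReal_mul (by positivity),
        Nat.cast_add_one, div_mul_cancel₀ _ (by positivity), ENNReal.ofReal_natCast]
    simp only [smul_smul, hcancel]
  refine tendsto_order.2 ⟨fun l hl => .of_forall fun n =>
    hl.trans_le ((one_le_div (hbpos n)).2 (hb n.le_succ)), fun l hl => ?_⟩
  filter_upwards [h.eventually_lt_mul hC hsm hν hμ hμ0 (.of_forall hb1) hshift hl] with n hn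
  exact (div_lt_iff₀ (hbpos n)).2 hn

lemma isRegVarMeasure_of_natCast_smul (hC : IsClosed C) (hsm : ScaleAxioms C sm) (hν : MemMO C ν)
    (hμ : MemMO C μ) (hμ0 : μ ≠ 0) {b : ℕ → ℝ} (hb0 : 0 < b 0) (hb : Monotone b)
    (h : TendstoMO C (fun n : ℕ => (n : ℝ≥0∞) • scaled sm ν (b n)) atTop μ) :
    IsRegVarMeasure C sm ν := by
  set M : ℝ := max 1 (b 0)⁻¹
  have hM : 1 ≤ M := le_max_left _ _
  have hM0 : 0 < M := one_pos.trans_le hM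
  have hMb : Monotone fun n => M * b n := hb.const_mul hM0.le
  have hMb1 : ∀ n, 1 ≤ M * b n := fun n =>
    (inv_le_iff_one_le_mul₀ hb0).1 (le_max_right 1 _) |>.trans (hMb n.zero_le)
  have hMμ := hμ.scaled hC hsm hM
  have hMμ0 := scaled_ne_zero hsm hM0 hμ0
  have hMh : TendstoMO C (fun n : ℕ => (n : ℝ≥0∞) • scaled sm ν (M * b n)) atTop
      (scaled sm μ M) := by
    simpa only [scaled_smul_scaled hsm (hb0.trans_le (hb (Nat.zero_le _))) hM0] using
      h.scaled hC hsm hM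
  exact isRegVarMeasure_of_seq hC hsm hν hMμ hMμ0 ENNReal.natCast_ne_top hMb
    (hMh.tendsto_scale_atTop hC hsm hν hMμ hMμ0 (by simpa using tendsto_natCast_atTop_atTop)
      (.of_forall hMb1))
    (hMh.tendsto_div_one hC hsm hν hMμ hMμ0 hMb hMb1) hMh

end Sequences

section Portmanteau

lemma exists_isCO_eq_one {X : Type*} [MetricSpace X] (C : Set X) {p q : ℝ} (hp : 0 < p)
    (hpq : p < q) : ∃ f : X → ℝ, IsCO C f ∧ (∀ x, f x ≤ 1) ∧ (∀ x, infDist x C < p → f x = 0) ∧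
      ∀ x, q ≤ infDist x C → f x = 1 := by
  have hd := continuous_infDist_pt C
  obtain ⟨f, hf0, hf1, hf⟩ := exists_continuous_zero_one_of_isClosed
    (isClosed_le hd continuous_const) (isClosed_le continuous_const hd)
    (disjoint_left.2 fun x (hx : infDist x C ≤ p) (hx' : q ≤ infDist x C) =>
      (hx'.trans hx).not_gt hpq)
  have hzero : ∀ x, infDist x C < p → f x = 0 := fun x hx => hf0 hx.le
  exact ⟨f, ⟨f.continuous.continuousOn, fun x => (hf x).1, ⟨1, fun x => (hf x).2⟩, p, hp, hzero⟩,
    fun x => (hf x).2, hzero, fun x hx => hf1 hx⟩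

variable {C : Set S} {μ : Measure S} {r : ℝ}

lemma exists_continuousAt_measureReal (hμ : MemMO C μ) {R : ℝ} (hR : 0 < R) :
    ∃ r ∈ Ioo 0 R, ContinuousAt (fun s => μ.real {x | s ≤ infDist x C}) r := by
  have hanti : AntitoneOn (fun s => μ.real {x | s ≤ infDist x C}) (Ioi 0) :=
    fun s hs t _ hst => measureReal_mono (fun _ => hst.trans) (hμ.2 s hs).ne
  obtain ⟨r, hr, hrR⟩ := (hanti.countable_not_continuousWithinAt.dense_compl ℝ).exists_between hR
  refine ⟨r, hrR, ?_⟩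
  have hcont := not_not.1 fun hr' => hr ⟨hrR.1, hr'⟩
  exact hcont.continuousAt (Ioi_mem_nhds hrR.1)

variable [BorelSpace S]

lemma measurableSet_le_infDist (C : Set S) (r : ℝ) : MeasurableSet {x | r ≤ infDist x C} :=
  measurableSet_le measurable_const measurable_infDist

lemma exists_isCO_integral_mem_Icc (hC : IsClosed C) {p q : ℝ} (hp : 0 < p) (hpq : p < q) :
    ∃ f : S → ℝ, IsCO C f ∧ ∀ μ : Measure S, MemMO C μ →
      ∫ x, f x ∂μ ∈ Icc (μ.real {x | q ≤ infDist x C}) (μ.real {x | p ≤ infDist x C}) := by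
  obtain ⟨f, hf, hf1, hfzero, hfone⟩ := exists_isCO_eq_one C hp hpq
  refine ⟨f, hf, fun μ hμ => ?_⟩
  have hind : ∀ s, 0 < s → Integrable ({x | s ≤ infDist x C}.indicator (1 : S → ℝ)) μ :=
    fun s hs => (integrable_indicator_iff (measurableSet_le_infDist C s)).2
      (integrableOn_const (hμ.2 s hs).ne)
  rw [← integral_indicator_one (measurableSet_le_infDist C q),
    ← integral_indicator_one (measurableSet_le_infDist C p)]
  exact ⟨integral_mono (hind q (hp.trans hpq)) (hf.integrable hC hμ) <|
      indicator_le' (fun x hx => (hfone x hx).ge) fun x _ => hf.nonneg x,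
    integral_mono (hf.integrable hC hμ) (hind p hp) <|
      le_indicator (fun x _ => hf1 x) fun x hx => (hfzero x (not_le.1 hx)).le⟩

lemma TendstoMO.tendsto_measureReal (hC : IsClosed C) {ι : Type*} {L : Filter ι}
    {ν : ι → Measure S} (h : TendstoMO C ν L μ) (hν : ∀ᶠ i in L, MemMO C (ν i))
    (hμ : MemMO C μ) (hr : 0 < r) (hcont : ContinuousAt (fun s => μ.real {x | s ≤ infDist x C}) r) :
    Tendsto (fun i => (ν i).real {x | r ≤ infDist x C}) L
      (𝓝 (μ.real {x | r ≤ infDist x C})) := by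
  refine tendsto_order.2 ⟨fun y hy => ?_, fun y hy => ?_⟩
  · obtain ⟨q, hyq, hrq⟩ := ((eventually_nhdsWithin_of_eventually_nhds
      (hcont.eventually_const_lt hy)).and (eventually_mem_nhdsWithin (s := Ioi r))).exists
    obtain ⟨f, hf, hbd⟩ := exists_isCO_integral_mem_Icc hC hr hrq
    filter_upwards [hν, (h f hf).eventually_const_lt (hyq.trans_le (hbd μ hμ).1)] with i hi hlt
    exact hlt.trans_le (hbd _ hi).2
  · obtain ⟨p, ⟨hpy, hp⟩, hpr⟩ := ((eventually_nhdsWithin_of_eventually_nhds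
      ((hcont.eventually_lt_const hy).and (eventually_gt_nhds hr))).and
      (eventually_mem_nhdsWithin (s := Iio r))).exists
    obtain ⟨f, hf, hbd⟩ := exists_isCO_integral_mem_Icc hC hp hpr
    filter_upwards [hν, (h f hf).eventually_lt_const ((hbd μ hμ).2.trans_lt hpy)] with i hi hlt
    exact (hbd _ hi).1.trans_lt hlt

end Portmanteau

section Conclusions

variable {C : Set S} {sm : ℝ → S → S} {ν : Measure S}

lemma TendstoMO.exists_natCast_smul {μ : Measure S} {b : ℝ → ℝ} (hbpos : ∀ t, 0 < t → 0 < b t)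
    (hb : MonotoneOn b (Ioi 0))
    (h : TendstoMO C (fun t => ENNReal.ofReal t • scaled sm ν (b t)) atTop μ) :
    ∃ b' : ℕ → ℝ, (∀ n, 0 < b' n) ∧ Monotone b' ∧
      TendstoMO C (fun n : ℕ => (n : ℝ≥0∞) • scaled sm ν (b' n)) atTop μ := by
  have hpos : ∀ n : ℕ, 0 < max (n : ℝ) 1 := fun n => one_pos.trans_le (le_max_right _ _)
  refine ⟨fun n => b (max (n : ℝ) 1), fun n => hbpos _ (hpos n), fun m n hmn =>
    hb (hpos m) (hpos n) (max_le_max_right 1 (Nat.cast_le.2 hmn)),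
    (h.comp tendsto_natCast_atTop_atTop).congr' ?_⟩
  filter_upwards [eventually_ge_atTop 1] with n hn
  rw [ENNReal.ofReal_natCast, max_eq_left (Nat.one_le_cast.2 hn)]

variable [BorelSpace S]

namespace IsRegVarMeasure

lemma exists_regVarFun (hC : IsClosed C) (hsm : ScaleAxioms C sm) (hν : MemMO C ν)
    (h : IsRegVarMeasure C sm ν) :
    ∃ μ : Measure S, μ ≠ 0 ∧ MemMO C μ ∧ ∃ c : ℝ → ℝ, RegVarFun c ∧
      TendstoMO C (fun t => ENNReal.ofReal (c t) • scaled sm ν t) atTop μ := by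
  obtain ⟨μ, hμ0, hμ, c, hc, hmono, -, hlim⟩ := h.exists_normalizer hC hsm hν
  exact ⟨μ, hμ0, hμ, c, hlim.regVarFun hC hsm hμ hμ0 hc hmono, hlim⟩

lemma exists_regVarSeq (hC : IsClosed C) (hsm : ScaleAxioms C sm) (hν : MemMO C ν)
    (h : IsRegVarMeasure C sm ν) :
    ∃ μ : Measure S, μ ≠ 0 ∧ MemMO C μ ∧ ∃ c : ℕ → ℝ, Monotone c ∧ RegVarSeq c ∧
      TendstoMO C (fun n : ℕ => ENNReal.ofReal (c n) • scaled sm ν n) atTop μ := by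
  obtain ⟨μ, hμ0, hμ, c, hc, hmono, -, hlim⟩ := h.exists_normalizer hC hsm hν
  exact ⟨μ, hμ0, hμ, fun n => c n, hmono.comp Nat.mono_cast,
    (hlim.regVarFun hC hsm hμ hμ0 hc hmono).regVarSeq hmono (hc 0),
    hlim.comp tendsto_natCast_atTop_atTop⟩

lemma exists_monotone_scale (hC : IsClosed C) (hsm : ScaleAxioms C sm) (hν : MemMO C ν)
    (h : IsRegVarMeasure C sm ν) :
    ∃ μ : Measure S, μ ≠ 0 ∧ MemMO C μ ∧ ∃ b : ℝ → ℝ, (∀ t, 0 < b t) ∧ Monotone b ∧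
      TendstoMO C (fun t => ENNReal.ofReal t • scaled sm ν (b t)) atTop μ := by
  obtain ⟨μ, hμ0, hμ, c, hc, hmono, hcont, hlim⟩ := h.exists_normalizer hC hsm hν
  obtain ⟨b, hb1, hb, hbtop, hcb⟩ := exists_monotone_rightInverse hmono hcont
    (hlim.tendsto_normalizer_atTop hC hsm hμ hμ0 hc hmono) 1
  refine ⟨μ, hμ0, hμ, b, fun t => one_pos.trans_le (hb1 t), hb, (hlim.comp hbtop).congr' ?_⟩
  filter_upwards [eventually_ge_atTop (c 1)] with t ht
  rw [hcb t ht]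

lemma exists_normalizing_set (hC : IsClosed C) (hsm : ScaleAxioms C sm) (hν : MemMO C ν)
    (h : IsRegVarMeasure C sm ν) :
    ∃ μ : Measure S, μ ≠ 0 ∧ MemMO C μ ∧ ∃ E : Set S, MeasurableSet E ∧ E ⊆ Cᶜ ∧ BddAway C E ∧
      (∀ᶠ t : ℝ in atTop, 0 < ν (sm t '' E) ∧ ν (sm t '' E) < ⊤) ∧
      TendstoMO C (fun t => (ν (sm t '' E))⁻¹ • scaled sm ν t) atTop μ := by
  obtain ⟨μ, hμ0, hμ, c, -, -, -, hlim⟩ := h.exists_normalizer hC hsm hν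
  obtain ⟨R, hI, hR⟩ :=
    ((eventually_integral_radial_pos hC hsm hμ hμ0).and eventually_mem_nhdsWithin).exists
  obtain ⟨r, ⟨hr, hrR⟩, hcont⟩ := exists_continuousAt_measureReal hμ hR
  set E : Set S := {x | r ≤ infDist x C}
  have hE : MeasurableSet E := measurableSet_le_infDist C r
  have hK : 0 < μ.real E := ENNReal.toReal_pos (((integral_radial_pos_iff hC hμ hR).1 hI).trans_le
    (measure_mono fun x hx => (hrR.trans hx).le)).ne' (hμ.2 r hr).ne
  have hmem : ∀ᶠ t in atTop, MemMO C (scaled sm ν t) := by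
    filter_upwards [eventually_ge_atTop 1] with t ht using hν.scaled hC hsm ht
  have hmass : Tendsto (fun t => (ENNReal.ofReal (c t)).toReal * (scaled sm ν t).real E) atTop
      (𝓝 (μ.real E)) := by
    simpa only [measureReal_ennreal_smul_apply] using hlim.tendsto_measureReal hC
      (hmem.mono fun t ht => ht.smul ENNReal.ofReal_ne_top) hμ hr hcont
  have hpos : ∀ᶠ t in atTop, 0 < (scaled sm ν t).real E := by
    filter_upwards [hmass.eventually_const_lt hK] with t ht
    exact measureReal_nonneg.lt_of_ne' (right_ne_zero_of_mul ht.ne')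
  refine ⟨_, measure_smul_ne_zero (ENNReal.ofReal_pos.2 (inv_pos.2 hK)).ne' hμ0,
    hμ.smul ENNReal.ofReal_ne_top, E, hE,
    fun x hx hxC => (hr.trans_le hx).ne' (infDist_zero_of_mem hxC), ⟨r, hr, fun x hx => hx⟩, ?_,
    (hlim.normalize hmass hK).congr' ?_⟩
  · filter_upwards [hpos, eventually_gt_atTop 0] with t hpt ht
    rw [← scaled_apply hsm ht hE]
    exact ENNReal.toReal_pos_iff.1 hpt
  · filter_upwards [hmem, hpos, eventually_gt_atTop 0] with t hmt hpt ht
    rw [ENNReal.ofReal_inv_of_pos hpt, ofReal_measureReal (hmt.2 r hr).ne, scaled_apply hsm ht hE]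

end IsRegVarMeasure

end Conclusions

theorem stmt10_general [BorelSpace S] (C : Set S) (hC : IsClosed C) (sm : ℝ → S → S)
    (hsm : ScaleAxioms C sm) (ν : Measure S) (hν : MemMO C ν) :
    List.TFAE [
      ∃ μ : Measure S, μ ≠ 0 ∧ MemMO C μ ∧ ∃ c : ℕ → ℝ, Monotone c ∧ RegVarSeq c ∧
        TendstoMO C (fun n : ℕ => ENNReal.ofReal (c n) • scaled sm ν n) atTop μ,
      ∃ μ : Measure S, μ ≠ 0 ∧ MemMO C μ ∧ ∃ c : ℝ → ℝ, RegVarFun c ∧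
        TendstoMO C (fun t => ENNReal.ofReal (c t) • scaled sm ν t) atTop μ,
      ∃ μ : Measure S, μ ≠ 0 ∧ MemMO C μ ∧ ∃ E : Set S, MeasurableSet E ∧ E ⊆ Cᶜ ∧ BddAway C E ∧
        (∀ᶠ t : ℝ in atTop, 0 < ν (sm t '' E) ∧ ν (sm t '' E) < ⊤) ∧
        TendstoMO C (fun t => (ν (sm t '' E))⁻¹ • scaled sm ν t) atTop μ,
      ∃ μ : Measure S, μ ≠ 0 ∧ MemMO C μ ∧ ∃ b : ℕ → ℝ, (∀ n, 0 < b n) ∧ Monotone b ∧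
        TendstoMO C (fun n : ℕ => (n : ℝ≥0∞) • scaled sm ν (b n)) atTop μ,
      ∃ μ : Measure S, μ ≠ 0 ∧ MemMO C μ ∧ ∃ b : ℝ → ℝ, (∀ t, 0 < t → 0 < b t) ∧
        MonotoneOn b (Ioi 0) ∧
        TendstoMO C (fun t => ENNReal.ofReal t • scaled sm ν (b t)) atTop μ] := by
  tfae_have 1 → 2
  | ⟨_, hμ0, hμ, _, _, _, h⟩ => (isRegVarMeasure_of_smul_natCast hC hsm hν hμ hμ0
      (fun _ => ENNReal.ofReal_ne_top) h).exists_regVarFun hC hsm hν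
  tfae_have 2 → 3
  | ⟨μ, hμ0, hμ, _, _, h⟩ =>
    IsRegVarMeasure.exists_normalizing_set hC hsm hν ⟨μ, hμ0, hμ, _, h⟩
  tfae_have 3 → 5
  | ⟨μ, hμ0, hμ, _, _, _, _, _, h⟩ => by
    obtain ⟨μ', hμ'0, hμ', b, hbpos, hb, h'⟩ :=
      IsRegVarMeasure.exists_monotone_scale hC hsm hν ⟨μ, hμ0, hμ, _, h⟩
    exact ⟨μ', hμ'0, hμ', b, fun t _ => hbpos t, hb.monotoneOn _, h'⟩
  tfae_have 5 → 4
  | ⟨μ, hμ0, hμ, _, hbpos, hb, h⟩ => ⟨μ, hμ0, hμ, h.exists_natCast_smul hbpos hb⟩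
  tfae_have 4 → 1
  | ⟨_, hμ0, hμ, _, hbpos, hb, h⟩ =>
    (isRegVarMeasure_of_natCast_smul hC hsm hν hμ hμ0 (hbpos 0) hb h).exists_regVarSeq hC hsm hν
  tfae_finish

/-- The five equivalent formulations of regular variation of a measure `ν ∈ M_O`.
`ν(s·)` is realized as the pushforward of `ν` under multiplication by `s⁻¹`. -/
theorem stmt10 [BorelSpace S] [CompleteSpace S] [TopologicalSpace.SeparableSpace S]
    (C : Set S) (hC : IsClosed C) (sm : ℝ → S → S) (hsm : ScaleAxioms C sm)
    (ν : Measure S) (hν : MemMO C ν) :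
    List.TFAE [
      -- (i)
      (∃ μ : Measure S, μ ≠ 0 ∧ MemMO C μ ∧ ∃ c : ℕ → ℝ, Monotone c ∧ RegVarSeq c ∧
        ∀ f : S → ℝ, IsCO C f →
          Tendsto (fun n : ℕ =>
              ∫ x, f x ∂ (ENNReal.ofReal (c n) • Measure.map (sm ((n : ℝ))⁻¹) ν))
            atTop (𝓝 (∫ x, f x ∂ μ))),
      -- (ii)
      (∃ μ : Measure S, μ ≠ 0 ∧ MemMO C μ ∧ ∃ c : ℝ → ℝ, RegVarFun c ∧
        ∀ f : S → ℝ, IsCO C f →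
          Tendsto (fun t : ℝ =>
              ∫ x, f x ∂ (ENNReal.ofReal (c t) • Measure.map (sm t⁻¹) ν))
            atTop (𝓝 (∫ x, f x ∂ μ))),
      -- (iii)
      (∃ μ : Measure S, μ ≠ 0 ∧ MemMO C μ ∧ ∃ E : Set S, MeasurableSet E ∧ E ⊆ Cᶜ ∧
        BddAway C E ∧ (∀ᶠ t : ℝ in atTop, 0 < ν (sm t '' E) ∧ ν (sm t '' E) < ⊤) ∧
        ∀ f : S → ℝ, IsCO C f →
          Tendsto (fun t : ℝ =>
              ∫ x, f x ∂ ((ν (sm t '' E))⁻¹ • Measure.map (sm t⁻¹) ν))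
            atTop (𝓝 (∫ x, f x ∂ μ))),
      -- (iv)
      (∃ μ : Measure S, μ ≠ 0 ∧ MemMO C μ ∧ ∃ b : ℕ → ℝ, (∀ n, 0 < b n) ∧ Monotone b ∧
        ∀ f : S → ℝ, IsCO C f →
          Tendsto (fun n : ℕ =>
              ∫ x, f x ∂ ((n : ℝ≥0∞) • Measure.map (sm (b n)⁻¹) ν))
            atTop (𝓝 (∫ x, f x ∂ μ))),
      -- (v)
      (∃ μ : Measure S, μ ≠ 0 ∧ MemMO C μ ∧ ∃ b : ℝ → ℝ, (∀ t : ℝ, 0 < t → 0 < b t) ∧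
        MonotoneOn b (Set.Ioi (0:ℝ)) ∧
        ∀ f : S → ℝ, IsCO C f →
          Tendsto (fun t : ℝ =>
              ∫ x, f x ∂ (ENNReal.ofReal t • Measure.map (sm (b t)⁻¹) ν))
            atTop (𝓝 (∫ x, f x ∂ μ)))
    ] :=
  stmt10_general C hC sm hsm ν hν
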